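/- There exist a constant C > 0 and b₀ such that for all integers b ≥ b₀ and uniformly over all points o ∈ ℝ₊² with D_δ(o) ⊆ ℝ₊², the variance of τ_b satisfies Var(τ_b) ≤ C·b^{1/3}/(log b)⁶. -/

import Mathlib

open MeasureTheory Real Set
open scoped ENNReal

noncomputable section

/-- The Euclidean plane ℝ². -/
abbrev Plane := EuclideanSpace ℝ (Fin 2)

/-- The point in the plane with Cartesian coordinates `(x, y)`. -/
def pt (x y : ℝ) : Plane := (WithLp.equiv 2 (Fin 2 → ℝ)).symm ![x, y]

/-- `D p r` is the closed disk of radius `r` centered at `p`. -/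
def D (p : Plane) (r : ℝ) : Set Plane := Metric.closedBall p r

/-- `X o q u` is the area of `D₁(o) \ (D₁(q) ∪ D₁(u))` (Lebesgue measure). -/
def X (o q u : Plane) : ℝ := (volume (D o 1 \ (D q 1 ∪ D u 1))).toReal

/-- `L = ⌊b^(1/3) (log b)²⌋`. -/
def L (b : ℝ) : ℕ := ⌊b ^ (1/3 : ℝ) * (Real.log b) ^ 2⌋₊

/-- `δ = 1/(b^(1/3) log b)`. -/
def δ (b : ℝ) : ℝ := 1 / (b ^ (1/3 : ℝ) * Real.log b)

/-- `θb = π / L`. -/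
def θb (b : ℝ) : ℝ := Real.pi / L b

/-- The point with polar coordinates `(r, θ)` relative to `o`. -/
def polarPt (o : Plane) (r θ : ℝ) : Plane := o + r • pt (Real.cos θ) (Real.sin θ)

/-- The sector `Q_i` of the disk `D_δ(o)`: points with polar coordinates `(r, θ)` relative
to `o` satisfying `0 < r ≤ δ` and `(i - 1/2)θ_b ≤ θ ≤ (i + 1/2)θ_b`. -/
def Qsector (o : Plane) (b : ℝ) (i : ℕ) : Set Plane :=
  {p | ∃ r θ : ℝ, 0 < r ∧ r ≤ δ b ∧
    ((i : ℝ) - 1/2) * θb b ≤ θ ∧ θ ≤ ((i : ℝ) + 1/2) * θb b ∧ p = polarPt o r θ}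

/-- The sector `R_i`, the reflection of `Q_i` through `o`: points with polar coordinates
`(r, θ)` relative to `o` satisfying `0 < r ≤ δ` and `(i - 1/2)θ_b ≤ θ - π ≤ (i + 1/2)θ_b`. -/
def Rsector (o : Plane) (b : ℝ) (i : ℕ) : Set Plane :=
  {p | ∃ r θ : ℝ, 0 < r ∧ r ≤ δ b ∧
    ((i : ℝ) - 1/2) * θb b ≤ θ - Real.pi ∧ θ - Real.pi ≤ ((i : ℝ) + 1/2) * θb b ∧
    p = polarPt o r θ}

/-- The extreme point `q̃_i`, with polar coordinates `(δ, (i - 1/2)θ_b)` relative to `o`. -/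
def qtil (o : Plane) (b : ℝ) (i : ℕ) : Plane := polarPt o (δ b) (((i : ℝ) - 1/2) * θb b)

/-- The extreme point `ũ_i`, with polar coordinates `(δ, (i + 1/2)θ_b + π)` relative to `o`. -/
def util (o : Plane) (b : ℝ) (i : ℕ) : Plane :=
  polarPt o (δ b) (((i : ℝ) + 1/2) * θb b + Real.pi)

/-- The closed positive quadrant `ℝ₊²`. -/
def quad : Set Plane := {p | 0 ≤ p 0 ∧ 0 ≤ p 1}

/-- The truncated unit disk `D̂₁(o) = D₁(o) ∩ ℝ₊²`. -/
def Dhat (o : Plane) : Set Plane := D o 1 ∩ quad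

/-- `λ̂(o) = π / |D̂₁(o)|`. -/
def lamHat (o : Plane) : ℝ := Real.pi / (volume (Dhat o)).toReal

/-- The uniform probability measure on a set `S` (normalized restricted Lebesgue measure). -/
def unif (S : Set Plane) : Measure Plane := (volume S)⁻¹ • volume.restrict S

/-- The joint law of `b` points chosen independently and uniformly at random from `D̂₁(o)`. -/
def ptsMeasure (o : Plane) (b : ℕ) : Measure (Fin b → Plane) :=
  Measure.pi fun _ => unif (Dhat o)

/-- The number of the points `ω 0, …, ω (b-1)` that lie in the set `S`. -/
def countIn {b : ℕ} (S : Set Plane) (ω : Fin b → Plane) : ℕ :=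
  Set.ncard {j : Fin b | ω j ∈ S}

open scoped Classical in
/-- `τ_b = Σ_{i=0}^{L-1} 1[N(Q_i) = 1 ∧ N(R_i) = 1]`. -/
def tau (o : Plane) (b : ℕ) (ω : Fin b → Plane) : ℕ :=
  ∑ i ∈ Finset.range (L b),
    if countIn (Qsector o b i) ω = 1 ∧ countIn (Rsector o b i) ω = 1 then 1 else 0

/-- The configurations for which every set of the family `S` contains exactly one point. -/
def exactlyOne {ι α : Type*} (b : ℕ) (S : ι → Set α) : Set (Fin b → α) :=
  {ω | ∀ k, ∃! j, ω j ∈ S k}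

/-- The configurations whose point `f k` lies in `S k` for all `k` and whose other points avoid
every `S k`. -/
def assignmentBox {ι α : Type*} {b : ℕ} (S : ι → Set α) (f : ι ↪ Fin b) : Set (Fin b → α) :=
  Set.pi univ (Function.extend f S fun _ => (⋃ k, S k)ᶜ)

section Occupancy

variable {ι α : Type*} {b : ℕ} {S : ι → Set α}

lemma mem_assignmentBox {f : ι ↪ Fin b} {ω : Fin b → α} :
    ω ∈ assignmentBox S f ↔
      (∀ k, ω (f k) ∈ S k) ∧ ∀ j, (¬ ∃ k, f k = j) → ∀ k, ω j ∉ S k := by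
  simp only [assignmentBox, Set.mem_pi, mem_univ, true_implies]
  constructor
  · intro h
    refine ⟨fun k => ?_, fun j hj k => ?_⟩
    · simpa [f.injective.extend_apply] using h (f k)
    · have := h j
      rw [Function.extend_apply' _ _ _ hj] at this
      simp only [mem_compl_iff, mem_iUnion, not_exists] at this
      exact this k
  · rintro ⟨h₁, h₂⟩ j
    by_cases hj : ∃ k, f k = j
    · obtain ⟨k, rfl⟩ := hj
      simpa [f.injective.extend_apply] using h₁ k
    · rw [Function.extend_apply' _ _ _ hj]
      simpa using h₂ j hj

lemma assignmentBox_subset_exactlyOne (hS : Pairwise (Function.onFun Disjoint S))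
    (f : ι ↪ Fin b) : assignmentBox S f ⊆ exactlyOne b S := by
  intro ω hω k
  obtain ⟨h₁, h₂⟩ := mem_assignmentBox.1 hω
  refine ⟨f k, h₁ k, fun j hj => ?_⟩
  by_cases hjf : ∃ k, f k = j
  · obtain ⟨k', rfl⟩ := hjf
    congr 1
    by_contra hne
    exact Set.disjoint_left.1 (hS hne) (h₁ k') hj
  · exact absurd hj (h₂ j hjf k)

lemma exactlyOne_eq_iUnion (hS : Pairwise (Function.onFun Disjoint S)) :
    exactlyOne b S = ⋃ f : ι ↪ Fin b, assignmentBox S f := by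
  refine Set.Subset.antisymm (fun ω hω => ?_)
    (iUnion_subset fun f => assignmentBox_subset_exactlyOne hS f)
  choose f hf hfu using hω
  have hinj : Function.Injective f := by
    intro k k' h
    by_contra hne
    exact Set.disjoint_left.1 (hS hne) (hf k) (h ▸ hf k')
  refine mem_iUnion.2 ⟨⟨f, hinj⟩, mem_assignmentBox.2 ⟨hf, fun j hj k hjk => hj ⟨k, ?_⟩⟩⟩
  exact (hfu k j hjk).symm

lemma pairwise_disjoint_assignmentBox (hS : Pairwise (Function.onFun Disjoint S)) :
    Pairwise (Function.onFun Disjoint fun f : ι ↪ Fin b => assignmentBox S f) := by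
  intro f g hfg
  refine Set.disjoint_left.2 fun ω hf hg => hfg ?_
  ext1 k
  exact (assignmentBox_subset_exactlyOne hS f hf k).unique
    ((mem_assignmentBox.1 hf).1 k) ((mem_assignmentBox.1 hg).1 k)

variable [MeasurableSpace α]

lemma measurableSet_assignmentBox [Countable ι] (hm : ∀ k, MeasurableSet (S k)) (f : ι ↪ Fin b) :
    MeasurableSet (assignmentBox S f) := by
  refine MeasurableSet.univ_pi fun j => ?_
  by_cases hj : ∃ k, f k = j
  · obtain ⟨k, rfl⟩ := hj
    simpa [f.injective.extend_apply] using hm k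
  · rw [Function.extend_apply' _ _ _ hj]
    exact (MeasurableSet.iUnion hm).compl

lemma measurableSet_exactlyOne [Finite ι] (hm : ∀ k, MeasurableSet (S k))
    (hS : Pairwise (Function.onFun Disjoint S)) : MeasurableSet (exactlyOne b S) := by
  rw [exactlyOne_eq_iUnion hS]
  exact MeasurableSet.iUnion fun f => measurableSet_assignmentBox hm f

variable [Fintype ι] {μ : Measure α} [IsProbabilityMeasure μ] {p : ℝ}

lemma measureReal_assignmentBox (hm : ∀ k, MeasurableSet (S k))
    (hS : Pairwise (Function.onFun Disjoint S)) (hp : ∀ k, μ.real (S k) = p) (f : ι ↪ Fin b) :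
    (Measure.pi fun _ : Fin b => μ).real (assignmentBox S f) =
      p ^ Fintype.card ι * (1 - Fintype.card ι * p) ^ (b - Fintype.card ι) := by
  classical
  have hU : μ.real (⋃ k, S k)ᶜ = 1 - Fintype.card ι * p := by
    rw [probReal_compl_eq_one_sub (MeasurableSet.iUnion hm), measureReal_iUnion_fintype hS hm]
    simp [hp]
  rw [Measure.real, assignmentBox, Measure.pi_pi, ENNReal.toReal_prod,
    ← Finset.prod_mul_prod_compl (Finset.univ.map f), Finset.prod_map]
  congr 1
  · rw [Finset.prod_congr rfl (g := fun _ => p)]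
    · simp
    · intro k _
      rw [f.injective.extend_apply]
      exact hp k
  · rw [Finset.prod_congr rfl (g := fun _ => 1 - Fintype.card ι * p)]
    · simp [Finset.card_compl]
    · intro j hj
      rw [Function.extend_apply' _ _ _ (by simpa using hj)]
      exact hU

lemma measureReal_exactlyOne (hm : ∀ k, MeasurableSet (S k))
    (hS : Pairwise (Function.onFun Disjoint S)) (hp : ∀ k, μ.real (S k) = p) :
    (Measure.pi fun _ : Fin b => μ).real (exactlyOne b S) =
      b.descFactorial (Fintype.card ι) *
        (p ^ Fintype.card ι * (1 - Fintype.card ι * p) ^ (b - Fintype.card ι)) := by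
  classical
  rw [exactlyOne_eq_iUnion hS, measureReal_iUnion_fintype (pairwise_disjoint_assignmentBox hS)
    (fun f => measurableSet_assignmentBox hm f)]
  simp [measureReal_assignmentBox hm hS hp, Fintype.card_embedding_eq]

end Occupancy

/-- Pairwise nonpositively correlated events: the variance of the number of events that occur is
at most its expectation. -/
lemma variance_sum_indicator_le {Ω ι : Type*} [MeasurableSpace Ω] {P : Measure Ω}
    [IsProbabilityMeasure P] {s : Finset ι} {A : ι → Set Ω} (hA : ∀ i ∈ s, MeasurableSet (A i))
    (hcov : ∀ i ∈ s, ∀ j ∈ s, i ≠ j → P.real (A i ∩ A j) ≤ P.real (A i) * P.real (A j)) :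
    ProbabilityTheory.variance (fun ω => ∑ i ∈ s, (A i).indicator (fun _ => (1 : ℝ)) ω) P ≤
      ∑ i ∈ s, P.real (A i) := by
  classical
  have hL : ∀ i ∈ s, MemLp ((A i).indicator fun _ => (1 : ℝ)) 2 P := fun i hi =>
    memLp_indicator_const 2 (hA i hi) 1 (Or.inr (measure_ne_top _ _))
  have hint : ∀ B : Set Ω, MeasurableSet B →
      ∫ ω, B.indicator (fun _ => (1 : ℝ)) ω ∂P = P.real B := fun B hB => by
    simp [integral_indicator_const _ hB]
  rw [ProbabilityTheory.variance_fun_sum' hL]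
  refine Finset.sum_le_sum fun i hi => ?_
  have hc : ∀ j ∈ s, ProbabilityTheory.covariance ((A i).indicator fun _ => (1 : ℝ))
      ((A j).indicator fun _ => (1 : ℝ)) P = P.real (A i ∩ A j) - P.real (A i) * P.real (A j) := by
    intro j hj
    rw [ProbabilityTheory.covariance_eq_sub (hL i hi) (hL j hj), hint _ (hA i hi),
      hint _ (hA j hj), ← hint _ ((hA i hi).inter (hA j hj))]
    congr 2
    ext ω
    by_cases h₁ : ω ∈ A i <;> by_cases h₂ : ω ∈ A j <;> simp [h₁, h₂]
  rw [← Finset.add_sum_erase _ _ hi]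
  have h₀ : ∑ j ∈ s.erase i, ProbabilityTheory.covariance ((A i).indicator fun _ => (1 : ℝ))
      ((A j).indicator fun _ => (1 : ℝ)) P ≤ 0 := by
    refine Finset.sum_nonpos fun j hj => ?_
    obtain ⟨hne, hj⟩ := Finset.mem_erase.1 hj
    rw [hc j hj]
    linarith [hcov i hi j hj hne.symm]
  rw [hc i hi, inter_self]
  nlinarith [mul_self_nonneg (P.real (A i))]

/-- The probability that four disjoint cells of probability `p` are occupied exactly once is at
most the square of the corresponding probability for two cells. -/
lemma descFactorial_four_mul_le {b : ℕ} (hb : 4 ≤ b) {p : ℝ} (hp₀ : 0 ≤ p)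
    (hp : 8 * b * p ≤ 1) :
    (b.descFactorial 4 : ℝ) * (p ^ 4 * (1 - 4 * p) ^ (b - 4)) ≤
      ((b.descFactorial 2 : ℝ) * (p ^ 2 * (1 - 2 * p) ^ (b - 2))) *
        ((b.descFactorial 2 : ℝ) * (p ^ 2 * (1 - 2 * p) ^ (b - 2))) := by
  obtain ⟨m, rfl⟩ := Nat.exists_eq_add_of_le' hb
  have e4 : ((m + 4).descFactorial 4 : ℝ) = (m + 4) * (m + 3) * ((m + 2) * (m + 1)) := by
    simp [Nat.descFactorial]; ring
  have e2 : ((m + 4).descFactorial 2 : ℝ) = (m + 4) * (m + 3) := by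
    simp [Nat.descFactorial]; ring
  have hs : m + 4 - 4 = m := by omega
  have hs' : m + 4 - 2 = m + 2 := by omega
  rw [e4, e2, hs, hs']
  push_cast at hp
  have hm : (0 : ℝ) ≤ m := Nat.cast_nonneg m
  have hp1 : 32 * p ≤ 1 := by nlinarith
  have h1 : (1 - 4 * p) ^ m ≤ ((1 - 2 * p) ^ 2) ^ m :=
    pow_le_pow_left₀ (by linarith) (by nlinarith) m
  have h2 : (m + 2 : ℝ) * (m + 1) ≤ (m + 4) * (m + 3) * (1 - 2 * p) ^ 4 := by
    have h3 : 1 - 8 * p ≤ (1 - 2 * p) ^ 4 := by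
      have := one_add_mul_le_pow (a := -(2 * p)) (by linarith) 4
      norm_num at this
      rw [sub_eq_add_neg 1 (2 * p)]
      linarith
    have h4 : (m + 4 : ℝ) * (m + 3) * (1 - 8 * p) ≤ (m + 4) * (m + 3) * (1 - 2 * p) ^ 4 := by
      gcongr
    nlinarith
  calc (m + 4 : ℝ) * (m + 3) * ((m + 2) * (m + 1)) * (p ^ 4 * (1 - 4 * p) ^ m)
      ≤ (m + 4 : ℝ) * (m + 3) * ((m + 4) * (m + 3) * (1 - 2 * p) ^ 4) *
          (p ^ 4 * ((1 - 2 * p) ^ 2) ^ m) := by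
        have : 0 ≤ (1 - 4 * p) ^ m := pow_nonneg (by linarith) m
        gcongr
    _ = _ := by rw [← pow_mul]; ring

/-- Variance bound for the number of pairs of cells `S i`, `S (n + i)` that both receive exactly
one of `b` independent points, for `2 * n` disjoint cells of probability `p`. -/
lemma variance_pairs_exactlyOne_le {α : Type*} [MeasurableSpace α] {μ : Measure α}
    [IsProbabilityMeasure μ] {b n : ℕ} {p : ℝ} {S : ℕ → Set α} (hm : ∀ k, MeasurableSet (S k))
    (hS : ∀ k < 2 * n, ∀ l < 2 * n, k ≠ l → Disjoint (S k) (S l))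
    (hp : ∀ k, μ.real (S k) = p) (hb : 4 ≤ b) (hbp : 8 * b * p ≤ 1) :
    ProbabilityTheory.variance (fun ω => ∑ i ∈ Finset.range n,
      (exactlyOne b ![S i, S (n + i)]).indicator (fun _ => (1 : ℝ)) ω)
      (Measure.pi fun _ : Fin b => μ) ≤ n * (b * p) ^ 2 := by
  have hp₀ : 0 ≤ p := hp 0 ▸ measureReal_nonneg
  have hm2 : ∀ i, ∀ k, MeasurableSet (![S i, S (n + i)] k) := by
    intro i k
    fin_cases k <;> simp [hm]
  have hS2 : ∀ i < n, Pairwise (Function.onFun Disjoint ![S i, S (n + i)]) := by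
    intro i hi k l hkl
    fin_cases k <;> fin_cases l <;> simp [Function.onFun] at hkl ⊢ <;>
      apply hS <;> omega
  have hE2 : ∀ i < n, (Measure.pi fun _ : Fin b => μ).real (exactlyOne b ![S i, S (n + i)]) =
      b.descFactorial 2 * (p ^ 2 * (1 - 2 * p) ^ (b - 2)) := by
    intro i hi
    have := measureReal_exactlyOne (b := b) (μ := μ) (p := p) (hm2 i) (hS2 i hi)
      (fun k => by fin_cases k <;> simp [hp])
    simpa using this
  refine (variance_sum_indicator_le ?_ ?_).trans ?_
  · intro i hi
    exact measurableSet_exactlyOne (hm2 i) (hS2 i (Finset.mem_range.1 hi))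
  · intro i hi j hj hij
    rw [Finset.mem_range] at hi hj
    rw [hE2 i hi, hE2 j hj]
    have hinter : exactlyOne b ![S i, S (n + i)] ∩ exactlyOne b ![S j, S (n + j)] =
        exactlyOne b ![S i, S (n + i), S j, S (n + j)] := by
      ext ω
      simp [exactlyOne, Fin.forall_fin_succ, and_assoc]
    have := measureReal_exactlyOne (b := b) (μ := μ) (p := p)
      (S := ![S i, S (n + i), S j, S (n + j)]) (fun k => by fin_cases k <;> simp [hm])
      (fun k l hkl => by
        fin_cases k <;> fin_cases l <;> simp [Function.onFun] at hkl ⊢ <;> apply hS <;> omega)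
      (fun k => by fin_cases k <;> simp [hp])
    rw [hinter, this]
    simpa using descFactorial_four_mul_le hb hp₀ hbp
  · have hb' : (4 : ℝ) ≤ b := by exact_mod_cast hb
    rw [Finset.sum_congr rfl fun i hi => hE2 i (Finset.mem_range.1 hi), Finset.sum_const,
      Finset.card_range, nsmul_eq_mul, mul_pow]
    have h1 : (b.descFactorial 2 : ℝ) ≤ b ^ 2 := by exact_mod_cast Nat.descFactorial_le_pow b 2
    have h2 : (1 - 2 * p) ^ (b - 2) ≤ 1 := pow_le_one₀ (by nlinarith) (by linarith)
    have h3 : p ^ 2 * (1 - 2 * p) ^ (b - 2) ≤ p ^ 2 := mul_le_of_le_one_right (sq_nonneg p) h2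
    have : 0 ≤ (1 - 2 * p) ^ (b - 2) := pow_nonneg (by nlinarith) _
    gcongr

/-- The half-open polar sector in `ℂ` of radius `d` and angles in `[a, c)`, without the origin. -/
def halfOpenSector (d a c : ℝ) : Set ℂ :=
  (fun x : ℝ × ℝ => (x.1 : ℂ) * Complex.exp (x.2 * Complex.I)) '' (Ioc 0 d ×ˢ Ico a c)

/-- The isometry from `ℂ` to the plane that takes the origin to `o`. -/
def fromComplex (o : Plane) : ℂ ≃ₜ Plane :=
  Complex.orthonormalBasisOneI.repr.toHomeomorph.trans (Homeomorph.addLeft o)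

section Sectors

lemma fromComplex_apply (o : Plane) (z : ℂ) :
    fromComplex o z = o + Complex.orthonormalBasisOneI.repr z := rfl

lemma polarPt_eq_fromComplex (o : Plane) (r θ : ℝ) :
    polarPt o r θ = fromComplex o (r * Complex.exp (θ * Complex.I)) := by
  rw [fromComplex_apply, polarPt, pt]
  congr 1
  ext i
  fin_cases i <;>
    simp [Complex.orthonormalBasisOneI_repr_apply, Complex.exp_ofReal_mul_I_re,
      Complex.exp_ofReal_mul_I_im]

lemma volume_image_fromComplex (o : Plane) (s : Set ℂ) :
    volume (fromComplex o '' s) = volume s := by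
  have h : MeasurePreserving (fromComplex o) volume volume :=
    (measurePreserving_add_left volume o).comp
      Complex.orthonormalBasisOneI.repr.measurePreserving
  rw [← h.measure_preimage_emb (fromComplex o).measurableEmbedding,
    preimage_image_eq _ (fromComplex o).injective]

lemma polar_eq_polar {r r' θ θ' : ℝ} (hr : 0 < r) (hr' : 0 < r')
    (h : (r : ℂ) * Complex.exp (θ * Complex.I) = r' * Complex.exp (θ' * Complex.I)) :
    r = r' ∧ ∃ n : ℤ, θ = θ' + n * (2 * π) := by
  have hn := congrArg norm h
  simp only [norm_mul, Complex.norm_real, Complex.norm_exp_ofReal_mul_I, mul_one,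
    Real.norm_eq_abs, abs_of_pos hr, abs_of_pos hr'] at hn
  refine ⟨hn, ?_⟩
  subst hn
  have h' := mul_left_cancel₀ (Complex.ofReal_ne_zero.2 hr.ne') h
  obtain ⟨n, hn⟩ := Complex.exp_eq_exp_iff_exists_int.1 h'
  refine ⟨n, ?_⟩
  have := congrArg Complex.im hn
  simpa using this

lemma int_eq_zero_of_angle {θ θ' : ℝ} {n : ℤ} (h : θ = θ' + n * (2 * π))
    (h₁ : θ - θ' < 2 * π) (h₂ : θ' - θ < 2 * π) : n = 0 := by
  have hπ := Real.pi_pos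
  have h3 : (n : ℝ) < 1 := by nlinarith
  have h4 : (-1 : ℝ) < n := by nlinarith
  have h3' : n < 1 := by exact_mod_cast h3
  have h4' : -1 < n := by exact_mod_cast h4
  omega

lemma measurableSet_halfOpenSector {d a c : ℝ} (h : c - a ≤ 2 * π) :
    MeasurableSet (halfOpenSector d a c) := by
  refine (measurableSet_Ioc.prod measurableSet_Ico).image_of_continuousOn_injOn
    (by fun_prop) ?_
  rintro ⟨r, θ⟩ ⟨hr, hθ⟩ ⟨r', θ'⟩ ⟨hr', hθ'⟩ heq
  simp only [mem_Ioc, mem_Ico] at hr hθ hr' hθ'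
  obtain ⟨h₁, n, hn⟩ := polar_eq_polar hr.1 hr'.1 heq
  have := int_eq_zero_of_angle hn (by linarith) (by linarith)
  subst this
  simp_all

lemma disjoint_halfOpenSector {d a c a' c' : ℝ} (h : c ≤ a') (h' : c' - a ≤ 2 * π) :
    Disjoint (halfOpenSector d a c) (halfOpenSector d a' c') := by
  refine Set.disjoint_left.2 ?_
  rintro _ ⟨⟨r, θ⟩, ⟨hr, hθ⟩, rfl⟩ ⟨⟨r', θ'⟩, ⟨hr', hθ'⟩, heq⟩
  simp only [mem_Ioc, mem_Ico] at hr hθ hr' hθ'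
  obtain ⟨-, n, hn⟩ := polar_eq_polar hr'.1 hr.1 heq
  have := int_eq_zero_of_angle hn (by linarith) (by linarith [Real.pi_pos])
  subst this
  simp at hn
  linarith

lemma volume_halfOpenSector_add (d a c t : ℝ) :
    volume (halfOpenSector d (a + t) (c + t)) = volume (halfOpenSector d a c) := by
  have h := (rotation (Circle.exp t)).measurePreserving
  have himg : halfOpenSector d (a + t) (c + t) =
      rotation (Circle.exp t) '' halfOpenSector d a c := by
    ext z
    constructor
    · rintro ⟨⟨r, θ⟩, ⟨hr, hθ⟩, rfl⟩
      refine ⟨_, ⟨(r, θ - t), ⟨hr, ?_⟩, rfl⟩, ?_⟩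
      · simp only [mem_Ico] at hθ ⊢
        constructor <;> linarith
      · simp only [rotation_apply, Circle.coe_exp]
        rw [mul_left_comm, ← Complex.exp_add]
        congr 2
        push_cast
        ring
    · rintro ⟨_, ⟨⟨r, θ⟩, ⟨hr, hθ⟩, rfl⟩, rfl⟩
      refine ⟨(r, θ + t), ⟨hr, ?_⟩, ?_⟩
      · simp only [mem_Ico] at hθ ⊢
        constructor <;> linarith
      · simp only [rotation_apply, Circle.coe_exp]
        rw [mul_left_comm, ← Complex.exp_add]
        congr 2
        push_cast
        ring
  rw [himg, ← h.measure_preimage_emb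
    (rotation (Circle.exp t)).toHomeomorph.measurableEmbedding,
    preimage_image_eq _ (rotation (Circle.exp t)).injective]

lemma volume_ray_eq_zero (θ : ℝ) :
    volume {z : ℂ | ∃ r : ℝ, z = r * Complex.exp (θ * Complex.I)} = 0 := by
  refine measure_mono_null ?_
    (Measure.addHaar_submodule volume (ℝ ∙ Complex.exp (θ * Complex.I)) ?_)
  · rintro _ ⟨r, rfl⟩
    exact Submodule.mem_span_singleton.2 ⟨r, by simp⟩
  · intro htop
    have h1 : Module.finrank ℝ (ℝ ∙ Complex.exp (θ * Complex.I)) = 1 :=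
      finrank_span_singleton (Complex.exp_ne_zero _)
    rw [htop, finrank_top, Complex.finrank_real_complex] at h1
    omega

/-- The `k`-th of the `2 * L b` half-open cells of the punctured disk of radius `δ b`. -/
def cell (o : Plane) (b : ℝ) (k : ℕ) : Set Plane :=
  fromComplex o '' halfOpenSector (δ b) (((k : ℝ) - 1/2) * θb b) (((k : ℝ) + 1/2) * θb b)

lemma cell_eq_of_angle (o : Plane) (b : ℝ) (k : ℕ) :
    cell o b k = {p | ∃ r θ : ℝ, 0 < r ∧ r ≤ δ b ∧
      ((k : ℝ) - 1/2) * θb b ≤ θ ∧ θ < ((k : ℝ) + 1/2) * θb b ∧ p = polarPt o r θ} := by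
  ext p
  constructor
  · rintro ⟨_, ⟨⟨r, θ⟩, ⟨hr, hθ⟩, rfl⟩, rfl⟩
    exact ⟨r, θ, hr.1, hr.2, hθ.1, hθ.2, (polarPt_eq_fromComplex o r θ).symm⟩
  · rintro ⟨r, θ, h₁, h₂, h₃, h₄, rfl⟩
    exact ⟨_, ⟨(r, θ), ⟨⟨h₁, h₂⟩, ⟨h₃, h₄⟩⟩, rfl⟩, (polarPt_eq_fromComplex o r θ).symm⟩

lemma volume_cell (o : Plane) (b : ℝ) (k : ℕ) : volume (cell o b k) = volume (cell o b 0) := by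
  rw [cell, cell, volume_image_fromComplex, volume_image_fromComplex,
    ← volume_halfOpenSector_add (δ b) (((0 : ℕ) - 1/2) * θb b) (((0 : ℕ) + 1/2) * θb b)
      (k * θb b)]
  congr 2 <;> push_cast <;> ring

lemma L_mul_θb {b : ℝ} (hL : 0 < L b) : L b * θb b = π := by
  rw [θb]
  field_simp

lemma θb_nonneg (b : ℝ) : 0 ≤ θb b := div_nonneg Real.pi_pos.le (Nat.cast_nonneg _)

lemma measurableSet_cell (o : Plane) {b : ℝ} (hL : 0 < L b) (k : ℕ) :
    MeasurableSet (cell o b k) := by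
  refine (fromComplex o).measurableEmbedding.measurableSet_image.2
    (measurableSet_halfOpenSector ?_)
  have h1 : (1 : ℝ) ≤ L b := by exact_mod_cast hL
  nlinarith [L_mul_θb hL, θb_nonneg b, Real.pi_pos]

lemma disjoint_cell_of_lt (o : Plane) {b : ℝ} {k l : ℕ} (hL : 0 < L b) (hkl : k < l)
    (hl : l < 2 * L b) : Disjoint (cell o b k) (cell o b l) := by
  refine (Set.disjoint_image_iff (fromComplex o).injective).2 (disjoint_halfOpenSector ?_ ?_)
  · have h1 : (k : ℝ) + 1 ≤ l := by exact_mod_cast hkl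
    nlinarith [θb_nonneg b]
  · have h1 : (l : ℝ) + 1 ≤ 2 * L b := by exact_mod_cast hl
    have h2 : (0 : ℝ) ≤ k := Nat.cast_nonneg k
    nlinarith [θb_nonneg b, L_mul_θb hL, mul_nonneg h2 (θb_nonneg b)]

lemma disjoint_cell (o : Plane) {b : ℝ} (hL : 0 < L b) :
    ∀ k < 2 * L b, ∀ l < 2 * L b, k ≠ l → Disjoint (cell o b k) (cell o b l) := by
  intro k hk l hl hne
  rcases lt_or_gt_of_ne hne with h | h
  · exact disjoint_cell_of_lt o hL h hl
  · exact (disjoint_cell_of_lt o hL h hk).symm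

lemma cell_subset_closedBall (o : Plane) (b : ℝ) (k : ℕ) :
    cell o b k ⊆ Metric.closedBall o (δ b) := by
  rintro _ ⟨_, ⟨⟨r, θ⟩, ⟨hr, hθ⟩, rfl⟩, rfl⟩
  simp only [mem_Ioc] at hr
  rw [fromComplex_apply, Metric.mem_closedBall, dist_eq_norm, add_sub_cancel_left,
    LinearIsometryEquiv.norm_map, norm_mul, Complex.norm_exp_ofReal_mul_I, Complex.norm_real,
    Real.norm_eq_abs, abs_of_pos hr.1, mul_one]
  exact hr.2

/-- The boundary rays that separate consecutive cells. -/
def boundaryRays (o : Plane) (b : ℝ) : Set Plane :=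
  ⋃ k : ℕ, fromComplex o '' {z : ℂ | ∃ r : ℝ,
    z = r * Complex.exp (((((k : ℝ) + 1/2) * θb b : ℝ) : ℂ) * Complex.I)}

lemma volume_boundaryRays (o : Plane) (b : ℝ) : volume (boundaryRays o b) = 0 := by
  refine measure_iUnion_null fun k => ?_
  rw [volume_image_fromComplex]
  exact volume_ray_eq_zero _

lemma mem_closed_cell_iff {o : Plane} {b : ℝ} {k : ℕ} {p : Plane} (hp : p ∉ boundaryRays o b) :
    (∃ r θ : ℝ, 0 < r ∧ r ≤ δ b ∧ ((k : ℝ) - 1/2) * θb b ≤ θ ∧ θ ≤ ((k : ℝ) + 1/2) * θb b ∧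
      p = polarPt o r θ) ↔ p ∈ cell o b k := by
  rw [cell_eq_of_angle]
  constructor
  · rintro ⟨r, θ, h₁, h₂, h₃, h₄, rfl⟩
    refine ⟨r, θ, h₁, h₂, h₃, lt_of_le_of_ne h₄ fun h => hp ?_, rfl⟩
    refine mem_iUnion.2 ⟨k, _, ⟨r, rfl⟩, ?_⟩
    rw [polarPt_eq_fromComplex, h]
  · rintro ⟨r, θ, h₁, h₂, h₃, h₄, rfl⟩
    exact ⟨r, θ, h₁, h₂, h₃, h₄.le, rfl⟩

lemma mem_Qsector_iff {o : Plane} {b : ℝ} {i : ℕ} {p : Plane} (hp : p ∉ boundaryRays o b) :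
    p ∈ Qsector o b i ↔ p ∈ cell o b i := mem_closed_cell_iff hp

lemma mem_Rsector_iff {o : Plane} {b : ℝ} {i : ℕ} {p : Plane} (hL : 0 < L b)
    (hp : p ∉ boundaryRays o b) : p ∈ Rsector o b i ↔ p ∈ cell o b (L b + i) := by
  rw [← mem_closed_cell_iff hp, Rsector, mem_ofPred_eq]
  have h := L_mul_θb hL
  push_cast
  have e1 : ((L b : ℝ) + i - 1/2) * θb b = π + (i - 1/2) * θb b := by rw [← h]; ring
  have e2 : ((L b : ℝ) + i + 1/2) * θb b = π + (i + 1/2) * θb b := by rw [← h]; ring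
  simp only [e1, e2, le_sub_iff_add_le', sub_le_iff_le_add']

end Sectors

lemma countIn_eq_one_iff {b : ℕ} {S : Set Plane} {ω : Fin b → Plane} :
    countIn S ω = 1 ↔ ∃! j, ω j ∈ S := by
  rw [countIn, Set.ncard_eq_one]
  simp [Set.ext_iff, ExistsUnique, eq_comm, iff_def, forall_and]

lemma volume_Dhat_ne_top (o : Plane) : volume (Dhat o) ≠ ⊤ :=
  ne_top_of_le_ne_top (isCompact_closedBall o 1).measure_lt_top.ne (measure_mono inter_subset_left)

lemma le_volume_Dhat {o : Plane} (ho : o ∈ quad) : π / 16 ≤ volume.real (Dhat o) := by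
  have hsub : Metric.closedBall (o + pt (1/2) (1/2)) (1/4) ⊆ Dhat o := by
    intro p hp
    rw [Metric.mem_closedBall, EuclideanSpace.dist_eq, Real.sqrt_le_left (by norm_num)] at hp
    simp only [Fin.sum_univ_two, Real.dist_eq, sq_abs, pt, PiLp.add_apply,
      WithLp.equiv_symm_apply, Matrix.cons_val_zero, Matrix.cons_val_one] at hp
    have h0 := abs_le_of_sq_le_sq' (a := p 0 - (o 0 + 1/2)) (b := 1/4)
      (by nlinarith [sq_nonneg (p 1 - (o 1 + 1/2))]) (by norm_num)
    have h1 := abs_le_of_sq_le_sq' (a := p 1 - (o 1 + 1/2)) (b := 1/4)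
      (by nlinarith [sq_nonneg (p 0 - (o 0 + 1/2))]) (by norm_num)
    refine ⟨?_, ?_, ?_⟩
    · rw [D, Metric.mem_closedBall, EuclideanSpace.dist_eq, Real.sqrt_le_left (by norm_num)]
      simp only [Fin.sum_univ_two, Real.dist_eq, sq_abs]
      nlinarith
    · linarith [ho.1]
    · linarith [ho.2]
  have h := measureReal_mono hsub (volume_Dhat_ne_top o)
  have hv : volume.real (Metric.closedBall (o + pt (1/2) (1/2)) (1/4)) = π / 16 := by
    rw [Measure.real, EuclideanSpace.volume_closedBall_fin_two, ENNReal.toReal_mul,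
      ENNReal.toReal_pow, ENNReal.toReal_ofReal (by norm_num),
      ENNReal.toReal_ofReal Real.pi_pos.le]
    ring
  linarith

lemma isProbabilityMeasure_unif {o : Plane} (ho : o ∈ quad) :
    IsProbabilityMeasure (unif (Dhat o)) := by
  constructor
  rw [unif, Measure.smul_apply, Measure.restrict_apply_univ, smul_eq_mul]
  refine ENNReal.inv_mul_cancel ?_ (volume_Dhat_ne_top o)
  intro h
  have := le_volume_Dhat ho
  rw [Measure.real, h, ENNReal.toReal_zero] at this
  linarith [Real.pi_pos]

lemma unif_real_of_subset {S T : Set Plane} (hST : S ⊆ T) (hS : MeasurableSet S) :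
    (unif T).real S = volume.real S / volume.real T := by
  simp only [Measure.real, unif, Measure.smul_apply, smul_eq_mul, ENNReal.toReal_mul,
    ENNReal.toReal_inv, Measure.restrict_apply hS, inter_eq_self_of_subset_left hST]
  rw [div_eq_inv_mul]

lemma volume_cell_zero_le (o : Plane) {b : ℝ} (hL : 0 < L b) (hδ : 0 ≤ δ b) :
    2 * L b * volume.real (cell o b 0) ≤ π * δ b ^ 2 := by
  have hfin : ∀ k, volume (cell o b k) ≠ ⊤ := fun k =>
    ne_top_of_le_ne_top (isCompact_closedBall o (δ b)).measure_lt_top.ne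
      (measure_mono (cell_subset_closedBall o b k))
  have hU := measureReal_biUnion_finset (μ := volume) (s := Finset.range (2 * L b))
    (f := cell o b)
    (fun k hk l hl hne => disjoint_cell o hL k (by simpa using hk) l (by simpa using hl) hne)
    (fun k _ => measurableSet_cell o hL k) (fun k _ => hfin k)
  have hle : volume.real (⋃ k ∈ Finset.range (2 * L b), cell o b k) ≤
      volume.real (Metric.closedBall o (δ b)) :=
    measureReal_mono (iUnion₂_subset fun k _ => cell_subset_closedBall o b k)
      (isCompact_closedBall o (δ b)).measure_lt_top.ne
  have hv : volume.real (Metric.closedBall o (δ b)) = π * δ b ^ 2 := by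
    rw [Measure.real, EuclideanSpace.volume_closedBall_fin_two, ENNReal.toReal_mul,
      ENNReal.toReal_pow, ENNReal.toReal_ofReal hδ, ENNReal.toReal_ofReal Real.pi_pos.le, mul_comm]
  have hk : ∀ k, volume.real (cell o b k) = volume.real (cell o b 0) := fun k => by
    rw [Measure.real, volume_cell, Measure.real]
  rw [hU, hv] at hle
  simpa [hk] using hle

lemma tau_ae_eq {o : Plane} (ho : o ∈ quad) {b : ℕ} (hL : 0 < L b) :
    (fun ω => (tau o b ω : ℝ)) =ᵐ[ptsMeasure o b] fun ω => ∑ i ∈ Finset.range (L b),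
      (exactlyOne b ![cell o b i, cell o b (L b + i)]).indicator (fun _ => (1 : ℝ)) ω := by
  have := isProbabilityMeasure_unif ho
  have hnull : ∀ᵐ p ∂unif (Dhat o), p ∉ boundaryRays o b := by
    refine measure_eq_zero_iff_ae_notMem.1 ?_
    rw [unif, Measure.smul_apply, smul_eq_mul, Measure.restrict_le_self.absolutelyContinuous
      (volume_boundaryRays o b), mul_zero]
  have hae : ∀ᵐ ω ∂ptsMeasure o b, ∀ j, ω j ∉ boundaryRays o b :=
    ae_all_iff.2 fun j =>
      (Measure.quasiMeasurePreserving_eval (fun _ : Fin b => unif (Dhat o)) j).ae hnull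
  filter_upwards [hae] with ω hω
  rw [tau]
  push_cast
  refine Finset.sum_congr rfl fun i _ => ?_
  classical
  rw [Set.indicator_apply]
  refine if_congr ?_ rfl rfl
  simp [countIn_eq_one_iff, exactlyOne, Fin.forall_fin_two, mem_Qsector_iff (hω _),
    mem_Rsector_iff hL (hω _)]

/-- The estimates on `L` and `δ` used for large `b`. -/
lemma L_δ_bounds {b : ℕ} (hb : 81 ≤ b) :
    4 ≤ log b ∧ (b : ℝ) ^ (1/3 : ℝ) * log b ^ 2 / 2 ≤ L b ∧
      (L b : ℝ) ≤ (b : ℝ) ^ (1/3 : ℝ) * log b ^ 2 ∧ 0 < δ b ∧ δ b ≤ 1 := by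
  have hb' : (81 : ℝ) ≤ b := by exact_mod_cast hb
  have hlog : 4 ≤ log b := by
    rw [Real.le_log_iff_exp_le (by linarith)]
    calc Real.exp 4 = Real.exp 1 ^ 4 := by rw [← Real.exp_nat_mul]; norm_num
      _ ≤ 3 ^ 4 := by
        have := Real.exp_one_lt_d9
        gcongr
        linarith
      _ ≤ b := by linarith
  have hc : 1 ≤ (b : ℝ) ^ (1/3 : ℝ) := Real.one_le_rpow (by linarith) (by norm_num)
  have hx : 2 ≤ (b : ℝ) ^ (1/3 : ℝ) * log b ^ 2 := by nlinarith
  refine ⟨hlog, ?_, Nat.floor_le (by linarith), by rw [δ]; positivity, ?_⟩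
  · have := Nat.sub_one_lt_floor ((b : ℝ) ^ (1/3 : ℝ) * log b ^ 2)
    rw [L]
    linarith
  · rw [δ, div_le_one (by positivity)]
    nlinarith

/-- There are `C > 0` and `b₀` such that for all integers `b ≥ b₀`, uniformly
over all `o ∈ ℝ₊²` with `D_δ(o) ⊆ ℝ₊²`: `Var(τ_b) ≤ C b^{1/3} / (log b)⁶`. -/
theorem variance_tau :
    ∃ C > (0 : ℝ), ∃ b₀ : ℕ, ∀ b : ℕ, b₀ ≤ b → ∀ o : Plane, o ∈ quad → D o (δ b) ⊆ quad →
      ProbabilityTheory.variance (fun ω => (tau o b ω : ℝ)) (ptsMeasure o b) ≤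
        C * (b : ℝ) ^ (1/3 : ℝ) / (Real.log b) ^ 6 := by
  refine ⟨256, by norm_num, 81, fun b hb o ho hDo => ?_⟩
  obtain ⟨hlog, hL₁, hL₂, hδ₀, hδ₁⟩ := L_δ_bounds hb
  have hb' : (81 : ℝ) ≤ b := by exact_mod_cast hb
  set c := (b : ℝ) ^ (1/3 : ℝ) with hc
  set l := Real.log b with hl
  have hc₀ : 0 < c := by positivity
  have hc3 : c ^ 3 = b := by
    rw [hc, ← Real.rpow_natCast, ← Real.rpow_mul (by positivity)]
    norm_num
  have hLr : (0 : ℝ) < L b := lt_of_lt_of_le (by positivity) hL₁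
  have hL : 0 < L b := by exact_mod_cast hLr
  have := isProbabilityMeasure_unif ho
  have hsub : ∀ k, cell o b k ⊆ Dhat o := fun k x hx => by
    have hx' := cell_subset_closedBall o b k hx
    exact ⟨Metric.closedBall_subset_closedBall hδ₁ hx', hDo hx'⟩
  set p := volume.real (cell o b 0) / volume.real (Dhat o) with hp
  have hpk : ∀ k, (unif (Dhat o)).real (cell o b k) = p := fun k => by
    rw [unif_real_of_subset (hsub k) (measurableSet_cell o hL k), hp]
    simp only [Measure.real, volume_cell o b k]
  have hp₀ : 0 ≤ p := by positivity
  have hbp : b * p ≤ 16 / l ^ 4 := by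
    have hD := le_volume_Dhat ho
    have hπ := Real.pi_pos
    have hcell := volume_cell_zero_le o hL hδ₀.le
    have hv : volume.real (cell o b 0) = p * volume.real (Dhat o) := by
      rw [hp, div_mul_cancel₀ _ (by linarith)]
    have h1 : 2 * L b * (p * (π / 16)) ≤ π * δ b ^ 2 := by
      refine le_trans ?_ hcell
      rw [hv]
      gcongr
    have h2 : c * l ^ 2 * p ≤ 16 * δ b ^ 2 := by
      have h3 : π * (2 * L b * p) ≤ π * (16 * δ b ^ 2) := by linarith
      have h4 := le_of_mul_le_mul_left h3 hπ
      nlinarith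
    have hδ : δ b = 1 / (c * l) := rfl
    rw [hδ] at h2
    rw [le_div_iff₀ (by positivity), ← hc3]
    calc c ^ 3 * p * l ^ 4 = (c * l ^ 2 * p) * (c * l) ^ 2 := by ring
      _ ≤ (16 * (1 / (c * l)) ^ 2) * (c * l) ^ 2 := by gcongr
      _ = 16 := by field_simp
  have hbp' : 8 * b * p ≤ 1 := by
    have : 16 / l ^ 4 ≤ 16 / 4 ^ 4 := by gcongr
    linarith
  rw [ProbabilityTheory.variance_congr (tau_ae_eq ho hL), ptsMeasure]
  refine (variance_pairs_exactlyOne_le (measurableSet_cell o hL) (disjoint_cell o hL) hpk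
    (by omega) hbp').trans ?_
  calc (L b : ℝ) * (b * p) ^ 2 ≤ (c * l ^ 2) * (16 / l ^ 4) ^ 2 := by gcongr
    _ = 256 * c / l ^ 6 := by field_simp; norm_num
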